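/- (Π_j-consequences, algebraic version) For all natural numbers j ≤ n and every GLP_ω formula φ, the formula ⟨n+1⟩φ is j-conservative over the set { ⟨j⟩(φ ∧ Q_n^k(φ)) : k < ω }; that is, for every formula ψ, ⟨n+1⟩φ ⊢_GLP ⟨j⟩ψ if and only if { ⟨j⟩(φ ∧ Q_n^k(φ)) : k < ω } ⊢_GLP ⟨j⟩ψ. -/

import Mathlib

/-!
Provability in GLP is truth at all worlds of the canonical model, whose accessibility relations
`Rel ξ` are transitive and decrease as `ξ` grows.

For the hard direction, let `w` satisfy every `⟨j⟩(φ ∧ Q_n^k(φ))`. Given finitely many formulas `θ`,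
a sufficiently long `Rel n`-chain of `φ`-worlds reaches one where all the implications `[n]θ → θ`
hold, because each of them fails at most once along the chain. By compactness `w` sees through
`Rel j` a `φ`-world `u` with `Rel n u u`. This reflexivity is what makes the theorems of GLP true at
a fresh root whose only immediate `Rel (n+1)`-successor is `u`. The root satisfies `⟨n+1⟩φ`, hence
`⟨j⟩ψ`, and as it has the same `Rel j`-successors as `u`, so does `u`, and then `w`.
-/

/-- Formulas of polymodal provability logic GLP: propositional variables, ⊤,
Boolean connectives, and a modality `[ξ]` for each ordinal `ξ`. -/
inductive GLPFormula : Type 1 where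
  | var : ℕ → GLPFormula
  | top : GLPFormula
  | neg : GLPFormula → GLPFormula
  | and : GLPFormula → GLPFormula → GLPFormula
  | imp : GLPFormula → GLPFormula → GLPFormula
  | box : Ordinal → GLPFormula → GLPFormula

namespace GLPFormula

/-- `⟨ξ⟩φ` abbreviates `¬[ξ]¬φ`. -/
def dia (ξ : Ordinal) (φ : GLPFormula) : GLPFormula := neg (box ξ (neg φ))

/-- Biconditional, defined from the other connectives. -/
def biimp (φ ψ : GLPFormula) : GLPFormula := and (imp φ ψ) (imp ψ φ)

/-- The set of ordinals occurring as modality indices in a formula. -/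
def mods : GLPFormula → Set Ordinal
  | var _ => ∅
  | top => ∅
  | neg φ => mods φ
  | and φ ψ => mods φ ∪ mods ψ
  | imp φ ψ => mods φ ∪ mods ψ
  | box ξ φ => insert ξ (mods φ)

end GLPFormula

/-- A propositional tautology: true under every Boolean valuation that respects
the Boolean connectives (variables and boxed formulas are treated as atoms). -/
def IsTautology (φ : GLPFormula) : Prop :=
  ∀ v : GLPFormula → Bool,
    v GLPFormula.top = true →
    (∀ ψ, v ψ.neg = !v ψ) →
    (∀ ψ χ, v (ψ.and χ) = (v ψ && v χ)) →
    (∀ ψ χ, v (ψ.imp χ) = (!v ψ || v χ)) →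
    v φ = true

/-- Derivability in GLP, with modality indices restricted to the set `S`
(`S = Set.univ` gives full GLP; `S = Set.Iio ω` gives GLP_ω). -/
inductive GLPProof (S : Set Ordinal) : GLPFormula → Prop where
  | taut {φ} : φ.mods ⊆ S → IsTautology φ → GLPProof S φ
  | distr {ξ φ ψ} : ξ ∈ S → φ.mods ⊆ S → ψ.mods ⊆ S →
      GLPProof S ((GLPFormula.box ξ (φ.imp ψ)).imp
        ((GLPFormula.box ξ φ).imp (GLPFormula.box ξ ψ)))
  | trans {ξ φ} : ξ ∈ S → φ.mods ⊆ S →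
      GLPProof S ((GLPFormula.box ξ φ).imp (GLPFormula.box ξ (GLPFormula.box ξ φ)))
  | lob {ξ φ} : ξ ∈ S → φ.mods ⊆ S →
      GLPProof S ((GLPFormula.box ξ ((GLPFormula.box ξ φ).imp φ)).imp (GLPFormula.box ξ φ))
  | negIntro {ξ ζ φ} : ξ < ζ → ξ ∈ S → ζ ∈ S → φ.mods ⊆ S →
      GLPProof S ((GLPFormula.dia ζ φ).imp (GLPFormula.dia ξ φ))
  | mono {ξ ζ φ} : ξ < ζ → ξ ∈ S → ζ ∈ S → φ.mods ⊆ S →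
      GLPProof S ((GLPFormula.dia ξ φ).imp (GLPFormula.box ζ (GLPFormula.dia ξ φ)))
  | mp {φ ψ} : GLPProof S (φ.imp ψ) → GLPProof S φ → GLPProof S ψ
  | nec {ξ φ} : ξ ∈ S → GLPProof S φ → GLPProof S (GLPFormula.box ξ φ)

/-- Derivability in full GLP (modalities indexed by all ordinals). -/
def GLPProves (φ : GLPFormula) : Prop := GLPProof Set.univ φ

/-- Derivability in GLP_ω (modalities indexed by natural numbers). -/
def GLPomegaProves (φ : GLPFormula) : Prop := GLPProof (Set.Iio Ordinal.omega0) φ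

/-- A GLP_ω formula: all modality indices are below ω. -/
def IsOmegaFormula (φ : GLPFormula) : Prop := φ.mods ⊆ Set.Iio Ordinal.omega0

/-- Conjunction of a finite list of formulas. -/
def listConj : List GLPFormula → GLPFormula
  | [] => GLPFormula.top
  | φ :: l => φ.and (listConj l)

/-- `SetProves S τ χ`: the set `τ` proves `χ`, i.e. `ψ₁ ∧ … ∧ ψₘ → χ` is
derivable for some finite list of members of `τ`. -/
def SetProves (S : Set Ordinal) (τ : Set GLPFormula) (χ : GLPFormula) : Prop :=
  ∃ l : List GLPFormula, (∀ ψ ∈ l, ψ ∈ τ) ∧ GLPProof S ((listConj l).imp χ)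

/-- The iterated consistency formulas: `Q n 0 φ = ⊤`, `Q n (k+1) φ = ⟨n⟩(φ ∧ Q n k φ)`. -/
def Q (n : Ordinal) : ℕ → GLPFormula → GLPFormula
  | 0, _ => GLPFormula.top
  | k + 1, φ => GLPFormula.dia n ((GLPFormula.and φ (Q n k φ)))

/-- `diaPow n k φ` is `⟨n⟩^k φ`, `k` iterated applications of `⟨n⟩`. -/
def diaPow (n : Ordinal) : ℕ → GLPFormula → GLPFormula
  | 0, φ => φ
  | k + 1, φ => GLPFormula.dia n (diaPow n k φ)

/-- The formula corresponding to a worm, given as its list of modality indices: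
`[] ↦ ⊤` and `γ :: A ↦ ⟨γ⟩A`. -/
def wormFormula : List Ordinal → GLPFormula
  | [] => GLPFormula.top
  | γ :: A => GLPFormula.dia γ (wormFormula A)

/-- The generalized `Q`-formula: `Q(⊤,φ) = ⊤`, `Q(⟨γ⟩A, φ) = ⟨γ⟩(φ ∧ Q(A,φ))`. -/
def QWorm : List Ordinal → GLPFormula → GLPFormula
  | [], _ => GLPFormula.top
  | γ :: A, φ => GLPFormula.dia γ (GLPFormula.and φ (QWorm A φ))

/-- A truth assignment to all formulas that respects the Boolean connectives and treats variables
and boxed formulas as atoms: the valuations over which `IsTautology` quantifies, as predicates. -/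
structure TruthAssignment where
  Holds : GLPFormula → Prop
  holds_top : Holds .top
  holds_neg : ∀ φ, Holds φ.neg ↔ ¬ Holds φ
  holds_and : ∀ φ ψ, Holds (φ.and ψ) ↔ Holds φ ∧ Holds ψ
  holds_imp : ∀ φ ψ, Holds (φ.imp ψ) ↔ (Holds φ → Holds ψ)

namespace TruthAssignment

attribute [simp] holds_top holds_neg holds_and holds_imp

@[simp]
theorem holds_dia (v : TruthAssignment) (ξ : Ordinal) (φ : GLPFormula) :
    v.Holds (.dia ξ φ) ↔ ¬ v.Holds (.box ξ φ.neg) :=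
  v.holds_neg _

theorem holds_listConj (v : TruthAssignment) (l : List GLPFormula) :
    v.Holds (listConj l) ↔ ∀ ψ ∈ l, v.Holds ψ := by
  induction l with
  | nil => simp [listConj]
  | cons ψ l ih => simp [listConj, ih]

/-- Compactness of propositional logic, with the limit taken as an ultraproduct. -/
theorem exists_holds_of_eventually {ι : Type*} (F : Filter ι) [F.NeBot] (v : ι → TruthAssignment) :
    ∃ u : TruthAssignment, ∀ φ, (∀ᶠ i in F, (v i).Holds φ) → u.Holds φ := by
  let U := Ultrafilter.of F
  let u : TruthAssignment :=
    { Holds := fun φ => ∀ᶠ i in U, (v i).Holds φ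
      holds_top := by simp
      holds_neg := by simp only [holds_neg, Ultrafilter.eventually_not, implies_true]
      holds_and := by simp [Filter.eventually_and]
      holds_imp := by simp [Ultrafilter.eventually_imp] }
  exact ⟨u, fun φ h => h.filter_mono (Ultrafilter.of_le F)⟩

end TruthAssignment

theorem isTautology_iff_forall_truthAssignment {φ : GLPFormula} :
    IsTautology φ ↔ ∀ v : TruthAssignment, v.Holds φ := by
  classical
  constructor
  · intro h v
    exact of_decide_eq_true <| h (fun ψ => decide (v.Holds ψ)) (by simp) (by simp) (by simp)
      (by simp [imp_iff_not_or])
  · intro h v v_top v_neg v_and v_imp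
    exact h
      { Holds := fun ψ => v ψ = true
        holds_top := v_top
        holds_neg := by simp [v_neg]
        holds_and := by simp [v_and]
        holds_imp := by simp [v_imp, imp_iff_not_or] }

theorem GLPProves.of_tautological_consequence {l : List GLPFormula} {χ : GLPFormula}
    (hl : ∀ ψ ∈ l, GLPProves ψ)
    (h : ∀ v : TruthAssignment, (∀ ψ ∈ l, v.Holds ψ) → v.Holds χ) :
    GLPProves χ := by
  induction l generalizing χ with
  | nil =>
    have tautology : IsTautology χ := isTautology_iff_forall_truthAssignment.2 (by simpa using h)
    exact .taut (Set.subset_univ _) tautology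
  | cons ψ l ih =>
    have imp_provable : GLPProves (ψ.imp χ) :=
      ih (fun θ hθ => hl θ (.tail _ hθ)) fun v hv => by simp_all
    exact .mp imp_provable (hl ψ (.head _))

/-- A world of the canonical model of GLP: a truth assignment satisfying every theorem of GLP, that
is, a maximal GLP-consistent set of formulas. -/
structure GLPWorld extends TruthAssignment where
  holds_of_glpProves : ∀ {φ}, GLPProves φ → Holds φ

theorem setProves_iff_forall_glpWorld {τ : Set GLPFormula} {χ : GLPFormula} :
    SetProves Set.univ τ χ ↔ ∀ w : GLPWorld, (∀ ψ ∈ τ, w.Holds ψ) → w.Holds χ := by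
  classical
  constructor
  · rintro ⟨l, hl, h⟩ w hw
    have conj_imp := w.holds_of_glpProves h
    rw [w.holds_imp, w.holds_listConj] at conj_imp
    exact conj_imp fun ψ hψ => hw ψ (hl ψ hψ)
  · contrapose!
    intro h
    have finitely_satisfiable (Δ : Finset GLPFormula) : ∃ v : TruthAssignment,
        (∀ ψ ∈ Δ, GLPProves ψ ∨ ψ ∈ τ → v.Holds ψ) ∧ ¬ v.Holds χ := by
      by_contra! hΔ
      refine h ⟨(Δ.filter (· ∈ τ)).toList, by simp,
        GLPProves.of_tautological_consequence (l := (Δ.filter GLPProves).toList) (by simp) ?_⟩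
      intro v hv
      rw [v.holds_imp, v.holds_listConj]
      intro hτ
      refine hΔ v fun ψ hψ => ?_
      rintro (provable | hmem)
      · exact hv ψ (by simp [hψ, provable])
      · exact hτ ψ (by simp [hψ, hmem])
    choose v hv hχ using finitely_satisfiable
    obtain ⟨u, hu⟩ := TruthAssignment.exists_holds_of_eventually Filter.atTop v
    have holds_of_mem {ψ : GLPFormula} (hψ : GLPProves ψ ∨ ψ ∈ τ) : u.Holds ψ :=
      hu ψ <| (Filter.eventually_ge_atTop {ψ}).mono fun Δ hΔ =>
        hv Δ ψ (Finset.singleton_subset_iff.1 hΔ) hψ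
    refine ⟨⟨u, fun h => holds_of_mem (.inl h)⟩, fun ψ h => holds_of_mem (.inr h), ?_⟩
    exact (u.holds_neg χ).1 (hu _ (by simp [hχ]))

theorem glpProves_iff_forall_glpWorld {φ : GLPFormula} :
    GLPProves φ ↔ ∀ w : GLPWorld, w.Holds φ := by
  refine ⟨fun h w => w.holds_of_glpProves h, fun h => ?_⟩
  obtain ⟨l, hl, hφ⟩ := setProves_iff_forall_glpWorld (τ := ∅).2 fun w _ => h w
  obtain rfl : l = [] := List.eq_nil_iff_forall_not_mem.2 hl
  exact .of_tautological_consequence (l := [(listConj []).imp φ])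
    (List.forall_mem_singleton.2 hφ) (by simp [listConj])

namespace GLPWorld

variable {ξ ζ : Ordinal} {φ ψ : GLPFormula} {u v w : GLPWorld}

theorem exists_holds_of_eventually {ι : Type*} (F : Filter ι) [F.NeBot] (w : ι → GLPWorld) :
    ∃ u : GLPWorld, ∀ φ, (∀ᶠ i in F, (w i).Holds φ) → u.Holds φ := by
  obtain ⟨u, hu⟩ := TruthAssignment.exists_holds_of_eventually F fun i => (w i).toTruthAssignment
  exact ⟨⟨u, fun h => hu _ (.of_forall fun i => (w i).holds_of_glpProves h)⟩, hu⟩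

theorem holds_mp (w : GLPWorld) (h : GLPProves (φ.imp ψ)) (hφ : w.Holds φ) : w.Holds ψ :=
  (w.holds_imp φ ψ).1 (w.holds_of_glpProves h) hφ

theorem holds_box_mp (himp : w.Holds (.box ξ (φ.imp ψ))) (hφ : w.Holds (.box ξ φ)) :
    w.Holds (.box ξ ψ) :=
  (w.holds_imp _ _).1
    (w.holds_mp (.distr trivial (Set.subset_univ _) (Set.subset_univ _)) himp) hφ

theorem holds_box_box (h : w.Holds (.box ξ φ)) : w.Holds (.box ξ (.box ξ φ)) :=
  w.holds_mp (.trans trivial (Set.subset_univ _)) h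

theorem holds_box_of_lob (h : w.Holds (.box ξ ((GLPFormula.box ξ φ).imp φ))) :
    w.Holds (.box ξ φ) :=
  w.holds_mp (.lob trivial (Set.subset_univ _)) h

theorem holds_dia_of_lt (hlt : ξ < ζ) (h : w.Holds (.dia ζ φ)) : w.Holds (.dia ξ φ) :=
  w.holds_mp (.negIntro hlt trivial trivial (Set.subset_univ _)) h

theorem holds_box_dia (hlt : ξ < ζ) (h : w.Holds (.dia ξ φ)) : w.Holds (.box ζ (.dia ξ φ)) :=
  w.holds_mp (.mono hlt trivial trivial (Set.subset_univ _)) h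

theorem holds_box_of_setProves (h : SetProves Set.univ {ψ | w.Holds (.box ξ ψ)} φ) :
    w.Holds (.box ξ φ) := by
  obtain ⟨l, hl, hφ⟩ := h
  induction l generalizing φ with
  | nil =>
    refine w.holds_of_glpProves (.nec trivial (glpProves_iff_forall_glpWorld.2 fun u => ?_))
    exact u.holds_mp hφ u.holds_top
  | cons ψ l ih =>
    have curried : GLPProves ((listConj l).imp (ψ.imp φ)) :=
      glpProves_iff_forall_glpWorld.2 fun u => by
        have := u.holds_of_glpProves hφ
        simp_all [listConj]
    exact holds_box_mp (ih (fun θ hθ => hl θ (.tail _ hθ)) curried) (hl ψ (.head _))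

/-- The accessibility relation of the modality `[ξ]` in the canonical model of GLP. -/
def Rel (ξ : Ordinal) (w u : GLPWorld) : Prop := ∀ φ, w.Holds (.box ξ φ) → u.Holds φ

theorem holds_box_iff : w.Holds (.box ξ φ) ↔ ∀ u, w.Rel ξ u → u.Holds φ :=
  ⟨fun h _ hu => hu φ h, fun h => holds_box_of_setProves (setProves_iff_forall_glpWorld.2 h)⟩

theorem holds_dia_iff : w.Holds (.dia ξ φ) ↔ ∃ u, w.Rel ξ u ∧ u.Holds φ := by
  simp [holds_box_iff]

theorem holds_box_mono (hle : ξ ≤ ζ) (h : w.Holds (.box ξ φ)) : w.Holds (.box ζ φ) := by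
  obtain rfl | hlt := hle.eq_or_lt
  · exact h
  have neg_neg_mono : w.Holds (.box ξ φ.neg.neg) → w.Holds (.box ζ φ.neg.neg) := by
    simpa using mt (holds_dia_of_lt (w := w) (φ := φ.neg) hlt)
  simp only [holds_box_iff, TruthAssignment.holds_neg, not_not] at neg_neg_mono h ⊢
  exact neg_neg_mono h

namespace Rel

theorem trans (hwu : w.Rel ξ u) (huv : u.Rel ξ v) : w.Rel ξ v :=
  fun _ h => huv _ (hwu _ (holds_box_box h))

theorem anti (hle : ξ ≤ ζ) (h : w.Rel ζ u) : w.Rel ξ u :=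
  fun _ hφ => h _ (holds_box_mono hle hφ)

theorem holds_dia (hlt : ξ < ζ) (h : w.Rel ζ u) (hφ : w.Holds (.dia ξ φ)) : u.Holds (.dia ξ φ) :=
  h _ (holds_box_dia hlt hφ)

end Rel

theorem holds_Q_of_rel (hlt : ξ < ζ) (hφ : w.Holds (.dia ζ φ)) (h : w.Rel ζ u) (k : ℕ) :
    u.Holds (Q ξ k φ) := by
  induction k generalizing u with
  | zero => exact u.holds_top
  | succ k ih =>
    obtain ⟨v, hwv, hv⟩ := holds_dia_iff.1 hφ
    have dia_and_Q : w.Holds (.dia ζ (φ.and (Q ξ k φ))) :=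
      holds_dia_iff.2 ⟨v, hwv, (v.holds_and _ _).2 ⟨hv, ih hwv⟩⟩
    exact h.holds_dia hlt (holds_dia_of_lt hlt dia_and_Q)

/-- Along a chain of successors each `θ` can fail reflection only once, since `θ` holds at all
points after a failure. -/
theorem exists_reflGen_reflecting {s : Finset GLPFormula}
    (h : w.Holds (φ.and (Q ξ s.card φ))) :
    ∃ u, Relation.ReflGen (Rel ξ) w u ∧ u.Holds φ ∧ ∀ θ ∈ s, u.Holds (.box ξ θ) → u.Holds θ := by
  classical
  induction hk : s.card generalizing s w with
  | zero =>
    obtain rfl := Finset.card_eq_zero.1 hk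
    exact ⟨w, .refl, ((w.holds_and _ _).1 h).1, by simp⟩
  | succ k ih =>
    rw [hk, w.holds_and] at h
    obtain ⟨hφ, hQ⟩ := h
    by_cases reflecting : ∀ θ ∈ s, w.Holds (.box ξ θ) → w.Holds θ
    · exact ⟨w, .refl, hφ, reflecting⟩
    push Not at reflecting
    obtain ⟨θ, hθ, hbox, -⟩ := reflecting
    obtain ⟨v, hwv, hv⟩ := holds_dia_iff.1 hQ
    have card_erase : (s.erase θ).card = k := by simp [hθ, hk]
    obtain ⟨u, hvu, hu, reflecting⟩ := ih (card_erase.symm ▸ hv) card_erase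
    have hwu : w.Rel ξ u := by
      cases hvu with
      | refl => exact hwv
      | single hvu => exact hwv.trans hvu
    refine ⟨u, .single hwu, hu, fun χ hχ => ?_⟩
    obtain rfl | hne := eq_or_ne χ θ
    · exact fun _ => hwu χ hbox
    · exact reflecting χ (Finset.mem_erase.2 ⟨hne, hχ⟩)

theorem exists_rel_rel_self (hle : ξ ≤ ζ) (h : ∀ k, w.Holds (.dia ξ (φ.and (Q ζ k φ)))) :
    ∃ u, w.Rel ξ u ∧ u.Rel ζ u ∧ u.Holds φ := by
  have finitely_reflecting (s : Finset GLPFormula) :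
      ∃ u, w.Rel ξ u ∧ u.Holds φ ∧ ∀ θ ∈ s, u.Holds (.box ζ θ) → u.Holds θ := by
    obtain ⟨v, hwv, hv⟩ := holds_dia_iff.1 (h s.card)
    obtain ⟨u, hvu, hu⟩ := exists_reflGen_reflecting hv
    refine ⟨u, ?_, hu⟩
    cases hvu with
    | refl => exact hwv
    | single hvu => exact hwv.trans (hvu.anti hle)
  choose u hwu huφ reflecting using finitely_reflecting
  obtain ⟨v, hv⟩ := exists_holds_of_eventually Filter.atTop u
  refine ⟨v, fun θ hθ => hv θ (.of_forall fun s => hwu s θ hθ), fun θ => ?_,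
    hv φ (.of_forall huφ)⟩
  refine (v.holds_imp _ _).1 (hv ((GLPFormula.box ζ θ).imp θ) ?_)
  filter_upwards [Filter.eventually_ge_atTop {θ}] with s hs
  exact ((u s).holds_imp _ _).2 (reflecting s θ (Finset.singleton_subset_iff.1 hs))

/-- Truth at a fresh root placed below the world `u`: its `Rel ζ`-successors are `u` and those of
`u`, its `Rel ξ`-successors for `ξ < ζ` are those of `u`, and it has no others. -/
def RootHolds (ζ : Ordinal) (u : GLPWorld) : GLPFormula → Prop
  | .var i => u.Holds (.var i)
  | .top => True
  | .neg φ => ¬ RootHolds ζ u φ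
  | .and φ ψ => RootHolds ζ u φ ∧ RootHolds ζ u ψ
  | .imp φ ψ => RootHolds ζ u φ → RootHolds ζ u ψ
  | .box ξ φ => (ξ ≤ ζ → u.Holds (.box ξ φ)) ∧ (ξ = ζ → u.Holds φ)

/-- The fresh root of `RootHolds` as a truth assignment. -/
def rootAssignment (ζ : Ordinal) (u : GLPWorld) : TruthAssignment where
  Holds := RootHolds ζ u
  holds_top := trivial
  holds_neg _ := Iff.rfl
  holds_and _ _ := Iff.rfl
  holds_imp _ _ := Iff.rfl

theorem rootAssignment_holds_box :
    (rootAssignment ζ u).Holds (.box ξ φ) ↔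
      (ξ ≤ ζ → u.Holds (.box ξ φ)) ∧ (ξ = ζ → u.Holds φ) :=
  Iff.rfl

theorem rootAssignment_holds_box_of_lt (h : ξ < ζ) :
    (rootAssignment ζ u).Holds (.box ξ φ) ↔ u.Holds (.box ξ φ) := by
  simp [rootAssignment_holds_box, h.le, h.ne]

theorem rootAssignment_holds_dia_of_lt (h : ξ < ζ) :
    (rootAssignment ζ u).Holds (.dia ξ φ) ↔ u.Holds (.dia ξ φ) := by
  simp [rootAssignment_holds_box_of_lt h]

theorem rootAssignment_holds_dia_self (h : u.Holds φ) : (rootAssignment ζ u).Holds (.dia ζ φ) := by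
  simp [rootAssignment_holds_box, h]

theorem rootAssignment_holds_of_glpProves (hrefl : ∀ ξ < ζ, u.Rel ξ u) (h : GLPProves φ) :
    (rootAssignment ζ u).Holds φ := by
  unfold GLPProves at h
  induction h with
  | taut _ h => exact isTautology_iff_forall_truthAssignment.1 h _
  | @distr ξ φ ψ =>
    simp only [TruthAssignment.holds_imp, rootAssignment_holds_box]
    exact fun himp hφ => ⟨fun hle => holds_box_mp (himp.1 hle) (hφ.1 hle),
      fun heq => himp.2 heq (hφ.2 heq)⟩
  | trans =>
    simp only [TruthAssignment.holds_imp, rootAssignment_holds_box]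
    exact fun h => ⟨fun hle => holds_box_box (h.1 hle), fun heq => h.1 heq.le⟩
  | @lob ξ φ =>
    simp only [TruthAssignment.holds_imp, rootAssignment_holds_box]
    exact fun h => ⟨fun hle => holds_box_of_lob (h.1 hle),
      fun heq => h.2 heq (holds_box_of_lob (h.1 heq.le))⟩
  | @negIntro ξ η φ hlt =>
    simp only [TruthAssignment.holds_imp, TruthAssignment.holds_dia]
    refine mt fun h => ?_
    have box_holds (hη : η ≤ ζ) : u.Holds (.box ξ φ.neg) :=
      (rootAssignment_holds_box_of_lt (hlt.trans_le hη)).1 h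
    refine rootAssignment_holds_box.2
      ⟨fun hη => holds_box_mono hlt.le (box_holds hη), fun hη => ?_⟩
    exact hrefl ξ (hη ▸ hlt) _ (box_holds hη.le)
  | @mono ξ η φ hlt =>
    rw [TruthAssignment.holds_imp]
    intro h
    have dia_holds (hη : η ≤ ζ) : u.Holds (.dia ξ φ) :=
      (rootAssignment_holds_dia_of_lt (hlt.trans_le hη)).1 h
    exact rootAssignment_holds_box.2
      ⟨fun hη => holds_box_dia hlt (dia_holds hη), fun hη => dia_holds hη.le⟩
  | mp _ _ ih_imp ih => exact ((rootAssignment ζ u).holds_imp _ _).1 ih_imp ih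
  | nec _ h _ =>
    exact ⟨fun _ => u.holds_of_glpProves (.nec trivial h), fun _ => u.holds_of_glpProves h⟩

end GLPWorld

theorem pi_j_consequences_algebraic_general {j n : Ordinal} (hjn : j ≤ n) (φ ψ : GLPFormula) :
    GLPProves ((GLPFormula.dia (n + 1) φ).imp (.dia j ψ)) ↔
      SetProves Set.univ {χ | ∃ k : ℕ, χ = .dia j (φ.and (Q n k φ))} (.dia j ψ) := by
  have hn : n < n + 1 := Order.lt_add_one_iff.2 le_rfl
  rw [setProves_iff_forall_glpWorld]
  constructor
  · intro h w hw
    obtain ⟨u, hwu, huu, hu⟩ := GLPWorld.exists_rel_rel_self hjn fun k => hw _ ⟨k, rfl⟩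
    have hrefl : ∀ ξ < n + 1, u.Rel ξ u := fun ξ hξ => huu.anti (Order.lt_add_one_iff.1 hξ)
    have root_dia : (GLPWorld.rootAssignment (n + 1) u).Holds (.dia j ψ) :=
      (TruthAssignment.holds_imp _ _ _).1 (GLPWorld.rootAssignment_holds_of_glpProves hrefl h)
        (GLPWorld.rootAssignment_holds_dia_self hu)
    obtain ⟨v, huv, hv⟩ := GLPWorld.holds_dia_iff.1
      ((GLPWorld.rootAssignment_holds_dia_of_lt (hjn.trans_lt hn)).1 root_dia)
    exact GLPWorld.holds_dia_iff.2 ⟨v, hwu.trans huv, hv⟩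
  · refine fun h => glpProves_iff_forall_glpWorld.2 fun w => (w.holds_imp _ _).2 fun hw => h w ?_
    rintro _ ⟨k, rfl⟩
    obtain ⟨u, hwu, hu⟩ := GLPWorld.holds_dia_iff.1 hw
    refine GLPWorld.holds_dia_iff.2 ⟨u, hwu.anti (hjn.trans hn.le), ?_⟩
    exact (u.holds_and _ _).2 ⟨hu, GLPWorld.holds_Q_of_rel hn hw hwu k⟩

/-- `Π_j`-consequences, algebraic version: for `j ≤ n`, `⟨n+1⟩φ` is `j`-conservative
over `{⟨j⟩(φ ∧ Q_n^k(φ)) : k < ω}`. -/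
theorem pi_j_consequences_algebraic (j n : ℕ) (hjn : j ≤ n) (φ : GLPFormula)
    (hφ : IsOmegaFormula φ) (ψ : GLPFormula) (hψ : IsOmegaFormula ψ) :
    GLPProves ((GLPFormula.dia ((n : Ordinal) + 1) φ).imp (GLPFormula.dia (j : Ordinal) ψ)) ↔
      SetProves Set.univ
        {χ | ∃ k : ℕ, χ = GLPFormula.dia (j : Ordinal) (GLPFormula.and φ (Q (n : Ordinal) k φ))}
        (GLPFormula.dia (j : Ordinal) ψ) := by
  exact pi_j_consequences_algebraic_general (by exact_mod_cast hjn) φ ψ
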